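/- arXiv:2508.16986 — 2 statements merged into one kernel-verified Lean document; each statement's English description precedes it below -/
import Mathlib

section
/- Let F = (A, R) be a finitary argumentation framework. Then the set of arguments a ∈ A that belong to at least one admissible extension of F is infinite if and only if F has an infinite admissible extension. -/
namespace AF

variable {α : Type*}

/-- `S` is conflict-free: no argument in `S` attacks another argument in `S`. -/
def ConflictFree (R : α → α → Prop) (S : Set α) : Prop :=
  ∀ a ∈ S, ∀ b ∈ S, ¬ R a b

/-- `S` defends the argument `a`: every attacker of `a` is attacked by some element of `S`. -/
def Defends (R : α → α → Prop) (S : Set α) (a : α) : Prop :=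
  ∀ x, R x a → ∃ y ∈ S, R y x

/-- `S` is admissible: conflict-free and defends each of its elements. -/
def Admissible (R : α → α → Prop) (S : Set α) : Prop :=
  ConflictFree R S ∧ ∀ a ∈ S, Defends R S a

/-- `S` is stable: conflict-free and attacks every argument outside of `S`. -/
def Stable (R : α → α → Prop) (S : Set α) : Prop :=
  ConflictFree R S ∧ ∀ a, a ∉ S → ∃ b ∈ S, R b a

/-- `S` is complete: conflict-free and equal to the set of arguments it defends. -/
def Complete (R : α → α → Prop) (S : Set α) : Prop :=
  ConflictFree R S ∧ S = {a | Defends R S a}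

/-- `S` is naive: conflict-free and no proper superset of `S` is conflict-free. -/
def Naive (R : α → α → Prop) (S : Set α) : Prop :=
  ConflictFree R S ∧ ∀ T : Set α, S ⊆ T → ConflictFree R T → T = S

/-- The framework is finitary: each argument has only finitely many attackers. -/
def Finitary (R : α → α → Prop) : Prop :=
  ∀ a : α, {x : α | R x a}.Finite

/-!
Choose an admissible set `S a ∋ a` for every accepted argument `a`, and let `L` be the limit of the
`S a` along a nonprincipal ultrafilter; finitariness makes `L` admissible. Extend `L` to a maximal
admissible set `M`. If `M` were finite, it would have only finitely many attackers, none of which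
lies in `L`, so almost every `S a` would avoid all of them. Then `M ∪ S a` is admissible, hence
`a ∈ S a ⊆ M` by maximality, for infinitely many `a`.
-/

section Lemmas

variable {ι : Type*} {R : α → α → Prop} {S T M : Set α} {a : α}

theorem Defends.mono (hS : Defends R S a) (hST : S ⊆ T) : Defends R T a := fun x hxa =>
  let ⟨y, hyS, hyx⟩ := hS x hxa
  ⟨y, hST hyS, hyx⟩

theorem Admissible.union (hS : Admissible R S) (hT : Admissible R T)
    (hTS : ∀ t ∈ T, ∀ s ∈ S, ¬ R t s) : Admissible R (S ∪ T) := by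
  have hST : ∀ s ∈ S, ∀ t ∈ T, ¬ R s t := fun s hs t ht hst =>
    let ⟨u, huT, hus⟩ := hT.2 t ht s hst
    hTS u huT s hs hus
  refine ⟨?_, ?_⟩
  · rintro a (haS | haT) b (hbS | hbT)
    · exact hS.1 a haS b hbS
    · exact hST a haS b hbT
    · exact hTS a haT b hbS
    · exact hT.1 a haT b hbT
  · rintro a (haS | haT)
    · exact (hS.2 a haS).mono Set.subset_union_left
    · exact (hT.2 a haT).mono Set.subset_union_right

theorem conflictFree_sUnion {c : Set (Set α)} (hdir : DirectedOn (· ⊆ ·) c)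
    (hc : ∀ S ∈ c, ConflictFree R S) : ConflictFree R (⋃₀ c) := by
  rintro a ⟨S, hSc, haS⟩ b ⟨T, hTc, hbT⟩
  obtain ⟨U, hUc, hSU, hTU⟩ := hdir S hSc T hTc
  exact hc U hUc a (hSU haS) b (hTU hbT)

theorem admissible_sUnion {c : Set (Set α)} (hdir : DirectedOn (· ⊆ ·) c)
    (hc : ∀ S ∈ c, Admissible R S) : Admissible R (⋃₀ c) := by
  refine ⟨conflictFree_sUnion hdir fun S hSc => (hc S hSc).1, ?_⟩
  rintro a ⟨S, hSc, haS⟩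
  exact ((hc S hSc).2 a haS).mono (Set.subset_sUnion_of_mem hSc)

theorem Admissible.exists_maximal_superset (hS : Admissible R S) :
    ∃ M, S ⊆ M ∧ Maximal (Admissible R) M :=
  zorn_subset_nonempty {S | Admissible R S}
    (fun c hc hchain _ =>
      ⟨⋃₀ c, admissible_sUnion hchain.directedOn hc, fun _ => Set.subset_sUnion_of_mem⟩)
    S hS

/-- The limit of a family of sets along an ultrafilter `𝓤`: the points belonging to `𝓤`-almost
every member of the family. It provides the compactness of the space of admissible sets. -/
def ultralimit (𝓤 : Ultrafilter ι) (S : ι → Set α) : Set α :=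
  {a | ∀ᶠ i in 𝓤, a ∈ S i}

variable {𝓤 : Ultrafilter ι} {F : ι → Set α}

theorem conflictFree_ultralimit (hF : ∀ᶠ i in 𝓤, ConflictFree R (F i)) :
    ConflictFree R (ultralimit 𝓤 F) := by
  intro a ha b hb
  obtain ⟨i, hFi, hai, hbi⟩ := (hF.and (ha.and hb)).exists
  exact hFi a hai b hbi

theorem Finitary.defends_ultralimit (hfin : Finitary R) (hF : ∀ᶠ i in 𝓤, Defends R (F i) a) :
    Defends R (ultralimit 𝓤 F) a := by
  intro x hxa
  have attacked : ∀ᶠ i in 𝓤, ∃ y ∈ {y | R y x}, y ∈ F i := hF.mono fun i hFi =>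
    let ⟨y, hyF, hyx⟩ := hFi x hxa
    ⟨y, hyx, hyF⟩
  obtain ⟨y, hyx, hy⟩ := (Ultrafilter.eventually_exists_mem_iff (hfin x)).1 attacked
  exact ⟨y, hy, hyx⟩

theorem Finitary.admissible_ultralimit (hfin : Finitary R) (hF : ∀ᶠ i in 𝓤, Admissible R (F i)) :
    Admissible R (ultralimit 𝓤 F) :=
  ⟨conflictFree_ultralimit (hF.mono fun _ hFi => hFi.1), fun a ha =>
    hfin.defends_ultralimit ((hF.and ha).mono fun _ hi => hi.1.2 a hi.2)⟩

theorem Finitary.eventually_not_attacks_of_ultralimit_subset (hfin : Finitary R)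
    (hM : M.Finite) (hMcf : ConflictFree R M) (hFM : ultralimit 𝓤 F ⊆ M) :
    ∀ᶠ i in 𝓤, ∀ x ∈ F i, ∀ m ∈ M, ¬ R x m := by
  have avoids : ∀ᶠ i in 𝓤, ∀ m ∈ M, ∀ x ∈ {x | R x m}, x ∉ F i := by
    refine (Filter.eventually_all_finite hM).2 fun m hm =>
      (Filter.eventually_all_finite (hfin m)).2 fun x hxm => ?_
    exact Ultrafilter.eventually_not.2 fun hx => hMcf x (hFM hx) m hm hxm
  exact avoids.mono fun i hi x hxF m hm hxm => hi m hm x hxm hxF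

theorem Finitary.eventually_subset_of_maximal (hfin : Finitary R) (hMfin : M.Finite)
    (hM : Maximal (Admissible R) M) (hF : ∀ᶠ i in 𝓤, Admissible R (F i))
    (hFM : ultralimit 𝓤 F ⊆ M) : ∀ᶠ i in 𝓤, F i ⊆ M := by
  filter_upwards [hF, hfin.eventually_not_attacks_of_ultralimit_subset hMfin hM.prop.1 hFM]
    with i hFi hFiM
  have hunion : Admissible R (M ∪ F i) := hM.prop.union hFi hFiM
  exact Set.subset_union_right.trans (hM.le_of_ge hunion Set.subset_union_left)

theorem Finitary.exists_infinite_admissible [Infinite ι] (hfin : Finitary R) {f : ι → α}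
    (hf : f.Injective) (hF : ∀ i, Admissible R (F i)) (hmem : ∀ i, f i ∈ F i) :
    ∃ S : Set α, S.Infinite ∧ Admissible R S := by
  have hF_ev : ∀ᶠ i in Filter.hyperfilter ι, Admissible R (F i) := .of_forall hF
  obtain ⟨M, hLM, hM⟩ := (hfin.admissible_ultralimit hF_ev).exists_maximal_superset
  refine ⟨M, fun hMfin => ?_, hM.prop⟩
  have hmem_M : ∀ᶠ i in Filter.hyperfilter ι, f i ∈ M :=
    (hfin.eventually_subset_of_maximal hMfin hM hF_ev hLM).mono fun i hFiM => hFiM (hmem i)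
  exact Filter.notMem_hyperfilter_of_finite (hMfin.preimage hf.injOn) hmem_M

end Lemmas

theorem credulously_accepted_infinite_iff_infinite_admissible
    (R : α → α → Prop) (hfin : Finitary R) :
    {a : α | ∃ S : Set α, Admissible R S ∧ a ∈ S}.Infinite ↔
      ∃ S : Set α, S.Infinite ∧ Admissible R S := by
  refine ⟨fun hinf => ?_, fun ⟨S, hS, hadm⟩ => hS.mono fun a ha => ⟨S, hadm, ha⟩⟩
  have := hinf.to_subtype
  choose F hF hmem using fun a : {a : α | ∃ S : Set α, Admissible R S ∧ a ∈ S} => a.2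
  exact hfin.exists_infinite_admissible Subtype.val_injective hF hmem

end AF
end

section
/- Let F be an argumentation framework whose set of arguments is ℕ. Then there exists a tree T ⊆ List ℕ such that the set of paths through T is in bijection with the set of infinite naive extensions of F. -/
namespace AF

variable {α : Type*}

/-- A tree: a set of finite strings closed under prefixes. -/
def IsTree (T : Set (List ℕ)) : Prop :=
  ∀ σ ∈ T, ∀ τ : List ℕ, τ <+: σ → τ ∈ T

/-- `π` is a path through `T`: all of its finite initial segments belong to `T`. -/
def IsPath (T : Set (List ℕ)) (π : ℕ → ℕ) : Prop :=
  ∀ n : ℕ, (List.range n).map π ∈ T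

/-- `T` is finitely branching: every node has only finitely many immediate successors. -/
def FinitelyBranching (T : Set (List ℕ)) : Prop :=
  ∀ σ ∈ T, {n : ℕ | σ ++ [n] ∈ T}.Finite

/-!
Identify a set of arguments with its indicator function, a point of Cantor space. Conflict-freeness
is a closed condition, while being infinite and being maximal are countable conjunctions of open
conditions, so the infinite naive extensions form a Gδ set `⋂ n, U n`. A Gδ set is in bijection
with a closed one: annotate each point `x` with the function sending `n` to the least length of
a prefix of `x` that already forces `x ∈ U n`. This annotation is checked on finite prefixes,
which makes the set of annotated points closed, and closed sets are exactly the path sets of trees.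
-/

open Function Set PiNat Topology

section ConflictFree

variable {R : α → α → Prop} {S T : Set α}

theorem ConflictFree.mono (hT : ConflictFree R T) (hST : S ⊆ T) : ConflictFree R S :=
  fun a ha b hb => hT a (hST ha) b (hST hb)

theorem naive_iff_maximal : Naive R S ↔ Maximal (ConflictFree R) S :=
  and_congr_right fun _ =>
    ⟨fun h _ hT hST => (h _ hST hT).le, fun h _ hST hT => (h hT hST).antisymm hST⟩

theorem naive_iff_forall_insert :
    Naive R S ↔ ConflictFree R S ∧ ∀ a, a ∈ S ∨ ¬ConflictFree R (insert a S) := by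
  simp only [naive_iff_maximal, or_iff_not_imp_left]
  exact maximal_iff_forall_insert fun _ _ => ConflictFree.mono

end ConflictFree

section Cantor

theorem infinite_iff_forall_finset_exists_notMem {S : Set α} :
    S.Infinite ↔ ∀ F : Finset α, ∃ a ∈ S, a ∉ F := by
  refine ⟨fun hS => hS.exists_notMem_finset, fun h hS => ?_⟩
  obtain ⟨a, haS, haF⟩ := h hS.toFinset
  exact haF (hS.mem_toFinset.2 haS)

theorem bijective_preimage_true : Bijective fun x : α → Bool => x ⁻¹' {true} := by
  refine ⟨fun x y hxy => funext fun a => ?_, fun S => ⟨S.boolIndicator, ?_⟩⟩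
  · exact Bool.eq_iff_iff.2 (Set.ext_iff.1 hxy a)
  · exact S.preimage_boolIndicator_true

theorem preimage_update_true [DecidableEq α] (x : α → Bool) (a : α) :
    update x a true ⁻¹' {true} = insert a (x ⁻¹' {true}) := by
  ext b
  by_cases hb : b = a <;> simp [hb]

theorem isClopen_setOfPred_mem_preimage_true (a : α) :
    IsClopen {x : α → Bool | a ∈ x ⁻¹' {true}} :=
  (isClopen_discrete {true}).preimage (continuous_apply a)

theorem isClosed_setOfPred_conflictFree (R : α → α → Prop) :
    IsClosed {x : α → Bool | ConflictFree R (x ⁻¹' {true})} := by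
  have hR (a b : α) : IsClosed {x : α → Bool |
      a ∈ x ⁻¹' {true} → b ∈ x ⁻¹' {true} → ¬R a b} :=
    isClosed_imp (isClopen_setOfPred_mem_preimage_true a).isOpen
      (isClosed_imp (isClopen_setOfPred_mem_preimage_true b).isOpen isClosed_const)
  convert isClosed_iInter fun a => isClosed_iInter (hR a) using 1
  ext x
  simp only [ConflictFree, mem_iInter, mem_ofPred_eq]
  exact forall_congr' fun a => forall_comm

theorem isOpen_setOfPred_not_conflictFree_insert (R : α → α → Prop) (a : α) :
    IsOpen {x : α → Bool | ¬ConflictFree R (insert a (x ⁻¹' {true}))} := by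
  classical
  simp only [← preimage_update_true]
  exact ((isClosed_setOfPred_conflictFree R).preimage
    (continuous_id.update a continuous_const)).isOpen_compl

theorem isGδ_setOfPred_naive [Countable α] (R : α → α → Prop) :
    IsGδ {x : α → Bool | Naive R (x ⁻¹' {true})} := by
  simp only [naive_iff_forall_insert, ofPred_and, ofPred_forall, ofPred_or]
  refine (isClosed_setOfPred_conflictFree R).isGδ.inter (.iInter_of_isOpen fun a => ?_)
  exact (isClopen_setOfPred_mem_preimage_true a).isOpen.union
    (isOpen_setOfPred_not_conflictFree_insert R a)

theorem isGδ_setOfPred_infinite [Countable α] :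
    IsGδ {x : α → Bool | (x ⁻¹' {true}).Infinite} := by
  simp only [infinite_iff_forall_finset_exists_notMem, ofPred_forall, ofPred_exists]
  exact .iInter_of_isOpen fun F => isOpen_iUnion fun a =>
    (isClopen_setOfPred_mem_preimage_true a).isOpen.and isOpen_const

end Cantor

section Closed

/-- The tree of all finite initial segments of members of `C`, which presents the closure of `C` in
Baire space as a set of paths. -/
def prefixTree (C : Set (ℕ → ℕ)) : Set (List ℕ) :=
  {σ | ∃ x ∈ C, ∃ n, (List.range n).map x = σ}

theorem isTree_prefixTree (C : Set (ℕ → ℕ)) : IsTree (prefixTree C) := by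
  rintro _ ⟨x, hx, n, rfl⟩ τ hτ
  refine ⟨x, hx, min τ.length n, ?_⟩
  rw [List.prefix_iff_eq_take.1 hτ]
  simp [← List.map_take, List.take_range]

theorem map_range_mem_prefixTree {C : Set (ℕ → ℕ)} {π : ℕ → ℕ} {n : ℕ} :
    (List.range n).map π ∈ prefixTree C ↔ (C ∩ cylinder π n).Nonempty := by
  constructor
  · rintro ⟨x, hx, m, hxm⟩
    obtain rfl : m = n := by simpa using congrArg List.length hxm
    exact ⟨x, hx, fun i hi => List.map_inj_left.1 hxm i (List.mem_range.2 hi)⟩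
  · rintro ⟨x, hx, hxπ⟩
    exact ⟨x, hx, n, List.map_inj_left.2 fun i hi => hxπ i (List.mem_range.1 hi)⟩

theorem isPath_prefixTree_iff {C : Set (ℕ → ℕ)} {π : ℕ → ℕ} :
    IsPath (prefixTree C) π ↔ π ∈ closure C := by
  simp only [IsPath, map_range_mem_prefixTree]
  refine ⟨fun hπ => ?_, fun hπ n => ?_⟩
  · by_contra hπC
    obtain ⟨n, hn⟩ := exists_disjoint_cylinder isClosed_closure hπC
    exact (hπ n).not_disjoint (hn.mono_left subset_closure)
  · rw [inter_comm]
    exact mem_closure_iff.1 hπ _ (isOpen_cylinder _ π n) (self_mem_cylinder π n)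

theorem exists_isTree_equiv_isPath_of_isClosed {β : Type*} [Countable β] [TopologicalSpace β]
    [DiscreteTopology β] {C : Set (ℕ → β)} (hC : IsClosed C) :
    ∃ T : Set (List ℕ), IsTree T ∧ Nonempty ({π : ℕ → ℕ // IsPath T π} ≃ C) := by
  obtain ⟨e, he⟩ := exists_injective_nat β
  have he_pi : IsClosedEmbedding (Pi.map fun _ : ℕ => e) := .piMap fun _ =>
    .of_continuous_injective_isClosedMap continuous_of_discreteTopology he
      fun _ _ => isClosed_discrete _
  have hpaths (π : ℕ → ℕ) : IsPath (prefixTree (Pi.map (fun _ => e) '' C)) π ↔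
      π ∈ Pi.map (fun _ => e) '' C := by
    rw [isPath_prefixTree_iff, (he_pi.isClosedMap C hC).closure_eq]
  exact ⟨_, isTree_prefixTree _,
    ⟨(Equiv.subtypeEquivRight hpaths).trans (Equiv.Set.image _ C he_pi.injective).symm⟩⟩

end Closed

section Modulus

theorem exists_cylinder_subset {E : ℕ → Type*} [∀ n, TopologicalSpace (E n)]
    [∀ n, DiscreteTopology (E n)] {U : Set (∀ n, E n)} (hU : IsOpen U) {x : ∀ n, E n}
    (hx : x ∈ U) : ∃ k, cylinder x k ⊆ U := by
  obtain ⟨k, hk⟩ := exists_disjoint_cylinder hU.isClosed_compl (notMem_compl_iff.2 hx)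
  exact ⟨k, disjoint_compl_left_iff_subset.1 hk⟩

theorem isClopen_setOfPred_cylinder_subset {E : ℕ → Type*} [∀ n, TopologicalSpace (E n)]
    [∀ n, DiscreteTopology (E n)] (U : Set (∀ n, E n)) (k : ℕ) :
    IsClopen {x | cylinder x k ⊆ U} := by
  have hcyl : IsLocallyConstant fun x : ∀ n, E n => cylinder x k :=
    (IsLocallyConstant.iff_exists_open _).2 fun x =>
      ⟨cylinder x k, isOpen_cylinder E x k, self_mem_cylinder x k,
        fun _ hy => mem_cylinder_iff_eq.1 hy⟩
  exact ⟨⟨hcyl {V | V ⊆ U}ᶜ⟩, hcyl {V | V ⊆ U}⟩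

variable {β : Type*}

/-- The sequences of pairs `(x n, m n)` in which `m n` is the least length of a prefix of `x` all
of whose extensions lie in `U n`. Leastness is encoded by saying that the lengths of such prefixes
are exactly those `k` with `m n ≤ k`. -/
def modulusGraph (U : ℕ → Set (ℕ → β)) : Set (ℕ → β × ℕ) :=
  {p | ∀ n k, cylinder (fun i => (p i).1) k ⊆ U n ↔ (p n).2 ≤ k}

theorem isClosed_modulusGraph [TopologicalSpace β] [DiscreteTopology β] (U : ℕ → Set (ℕ → β)) :
    IsClosed (modulusGraph U) := by
  have hcyl (n k : ℕ) : IsClopen {p : ℕ → β × ℕ | cylinder (fun i => (p i).1) k ⊆ U n} :=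
    (isClopen_setOfPred_cylinder_subset (U n) k).preimage (by fun_prop)
  have hle (n k : ℕ) : IsClopen {p : ℕ → β × ℕ | (p n).2 ≤ k} :=
    (isClopen_discrete (Iic k)).preimage (by fun_prop)
  simp only [modulusGraph, ofPred_forall]
  exact isClosed_iInter fun n => isClosed_iInter fun k =>
    (Homeomorph.refl (ℕ → β × ℕ)).isClosed_setOfPred_iff (hcyl n k) (hle n k)

theorem exists_forall_cylinder_subset_iff_le [TopologicalSpace β] [DiscreteTopology β]
    {U : Set (ℕ → β)} (hU : IsOpen U) {x : ℕ → β} (hx : x ∈ U) :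
    ∃ m, ∀ k, cylinder x k ⊆ U ↔ m ≤ k := by
  classical
  have hex := exists_cylinder_subset hU hx
  exact ⟨Nat.find hex, fun k => ⟨fun hk => Nat.find_min' hex hk,
    fun hk => (cylinder_anti x hk).trans (Nat.find_spec hex)⟩⟩

theorem bijOn_modulusGraph [TopologicalSpace β] [DiscreteTopology β] {U : ℕ → Set (ℕ → β)}
    (hU : ∀ n, IsOpen (U n)) :
    BijOn (fun p i => (p i).1) (modulusGraph U) (⋂ n, U n) := by
  refine ⟨fun p hp => mem_iInter.2 fun n => ?_, fun p hp q hq hpq => ?_, fun x hx => ?_⟩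
  · exact (hp n (p n).2).2 le_rfl (self_mem_cylinder _ _)
  · funext n
    refine Prod.ext (congrFun hpq n) (eq_of_forall_ge_iff fun k => ?_)
    rw [← hp n k, ← hq n k]
    exact iff_of_eq (congrArg (cylinder · k ⊆ U n) hpq)
  · choose m hm using fun n => exists_forall_cylinder_subset_iff_le (hU n) (mem_iInter.1 hx n)
    exact ⟨fun n => (x n, m n), hm, rfl⟩

theorem exists_isTree_equiv_isPath_of_isGδ [Countable β] [TopologicalSpace β]
    [DiscreteTopology β] {X : Set (ℕ → β)} (hX : IsGδ X) :
    ∃ T : Set (List ℕ), IsTree T ∧ Nonempty ({π : ℕ → ℕ // IsPath T π} ≃ X) := by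
  obtain ⟨U, hU, rfl⟩ := isGδ_iff_eq_iInter_nat.1 hX
  obtain ⟨T, hT, ⟨e⟩⟩ := exists_isTree_equiv_isPath_of_isClosed (isClosed_modulusGraph U)
  exact ⟨T, hT, ⟨e.trans (bijOn_modulusGraph hU).equiv⟩⟩

end Modulus

theorem tree_for_infinite_naive (R : ℕ → ℕ → Prop) :
    ∃ T : Set (List ℕ), IsTree T ∧
      Nonempty ({π : ℕ → ℕ // IsPath T π} ≃
        {S : Set ℕ // S.Infinite ∧ Naive R S}) := by
  obtain ⟨T, hT, ⟨e⟩⟩ :=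
    exists_isTree_equiv_isPath_of_isGδ (isGδ_setOfPred_infinite.inter (isGδ_setOfPred_naive R))
  exact ⟨T, hT,
    ⟨e.trans ((Equiv.ofBijective _ bijective_preimage_true).subtypeEquiv fun _ => Iff.rfl)⟩⟩

end AF
end
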